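/- Let m and p be positive integers and set l = 4mp−1, t = 4mp−2p−1, p' = 2mp−1. Then for every integer k with 1 ≤ k ≤ p': σ_{i_k} + σ_{i_{p'+1−k}} = 2 if k = ap for some odd integer a with 1 ≤ a ≤ 2m−1; σ_{i_k} + σ_{i_{p'+1−k}} = −2 if k = ap for some even integer a with 2 ≤ a ≤ 2m−2; and σ_{i_k} + σ_{i_{p'+1−k}} = 0 if k is not a multiple of p. -/

import Mathlib

open Finset

noncomputable section

/-- The q-Pochhammer symbol `(a; q)_n = ∏_{k=0}^{n-1} (1 - a q^k)`. -/
def qPoch (a q : ℂ) (n : ℕ) : ℂ := ∏ k ∈ Finset.range n, (1 - a * q ^ k)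

/-- The Gaussian binomial coefficient `[n; k]_q` as a polynomial in `q` over `ℤ`,
defined by the q-Pascal rule `[n; k] = [n-1; k-1] + q^k [n-1; k]`.  It is the
polynomial equal to `(q;q)_n / ((q;q)_{n-k} (q;q)_k)`. -/
def gaussPoly : ℕ → ℕ → Polynomial ℤ
  | _, 0 => 1
  | 0, _ + 1 => 0
  | n + 1, k + 1 => gaussPoly n k + Polynomial.X ^ (k + 1) * gaussPoly n (k + 1)

/-- The Gaussian binomial coefficient `[n; k]_q` evaluated at `q : ℂ`. -/
def gbin (q : ℂ) (n k : ℕ) : ℂ := Polynomial.aeval q (gaussPoly n k)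

/-- `σ_j = (-1)^⌊(2j-1)t/l⌋`. -/
def sigmaT (l t j : ℕ) : ℤ := (-1) ^ ((2 * j - 1) * t / l)

/-- `r(j)`: the unique integer with `r(j) ≡ (2j-1)t (mod 2l)` and `-l < r(j) < l`. -/
def rT (l t j : ℕ) : ℤ :=
  if (((2 * j - 1) * t % (2 * l) : ℕ) : ℤ) < (l : ℤ) then (((2 * j - 1) * t % (2 * l) : ℕ) : ℤ)
  else (((2 * j - 1) * t % (2 * l) : ℕ) : ℤ) - 2 * (l : ℤ)

/-- `r'(j) = (|r(j)| + 1)/2`. -/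
def rpT (l t j : ℕ) : ℕ := ((rT l t j).natAbs + 1) / 2

open Classical in
/-- `i_k`: the unique `j ∈ {1, …, (l-1)/2}` with `r'(j) = k`. -/
def iT (l t k : ℕ) : ℕ :=
  if h : ∃ j, j ∈ Finset.Icc 1 ((l - 1) / 2) ∧ rpT l t j = k then h.choose else 0

/-- `ε_{i,j,m}`: `1` if `j ≡ -i, -i-1 (mod 2m)`, `-1` if `j ≡ i, i-1 (mod 2m)`,
`0` otherwise (and `0` when `m ∣ i`, a case excluded in all uses). -/
def epsLO (m i j : ℕ) : ℤ :=
  if m ∣ i then 0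
  else if 2 * m ∣ (i + j) ∨ 2 * m ∣ (i + j + 1) then 1
  else if (2 * (m : ℤ)) ∣ ((j : ℤ) - (i : ℤ)) ∨ (2 * (m : ℤ)) ∣ ((j : ℤ) - (i : ℤ) + 1) then -1
  else 0

/-- `Δ_{i,j,m}`: `1` if `j ≡ -i, -i+1 (mod 2m)`, `-1` if `j ≡ i, i+1 (mod 2m)`,
`0` otherwise (and `0` when `m ∣ i`, a case excluded in all uses). -/
def deltaLO (m i j : ℕ) : ℤ :=
  if m ∣ i then 0
  else if 2 * m ∣ (i + j) ∨ 2 * m ∣ (i + j - 1) then 1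
  else if (2 * (m : ℤ)) ∣ ((j : ℤ) - (i : ℤ)) ∨ (2 * (m : ℤ)) ∣ ((j : ℤ) - (i : ℤ) - 1) then -1
  else 0

/-- `γ_{i,m} = 1` if `i ≡ 1, …, m-1 (mod 2m)` and `-1` otherwise. -/
def gamLO (m i : ℕ) : ℤ :=
  if 1 ≤ i % (2 * m) ∧ i % (2 * m) ≤ m - 1 then 1 else -1

/-- `β_{i,m} = 1` if `i ≡ 1, …, m-1 (mod 2m)`, `-1` if `i ≡ m+1, …, 2m-1 (mod 2m)`,
and `0` if `m ∣ i`. -/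
def betLO (m i : ℕ) : ℤ :=
  if 1 ≤ i % (2 * m) ∧ i % (2 * m) ≤ m - 1 then 1
  else if m + 1 ≤ i % (2 * m) ∧ i % (2 * m) ≤ 2 * m - 1 then -1
  else 0

/-- Extend a tuple `f : Fin P → Fin N` to `n : ℕ → ℕ` with `n i = f (i-1)` for
`1 ≤ i ≤ P` and `n i = 0` otherwise (in particular `n 0 = 0`). -/
def extTup (P N : ℕ) (f : Fin P → Fin N) : ℕ → ℕ :=
  fun i => if h : 1 ≤ i ∧ i ≤ P then (f ⟨i - 1, by omega⟩ : ℕ) else 0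

/-- Takata's exponent `a(n)` (an integer; every integer division below is exact). -/
def aT (l t : ℕ) (n : ℕ → ℕ) : ℤ :=
  -(∑ j ∈ Icc 1 ((l - 1) / 2), (∑ k ∈ Icc (rpT l t j) ((l - 1) / 2),
      (sigmaT l t (iT l t k) + sigmaT l t (iT l t ((l - 1) / 2 + 1 - k))) / 2) *
      ((n j : ℤ) - (n (j - 1) : ℤ)))
  - ∑ j ∈ Icc 1 ((l - 1) / 2 - 1), ((sigmaT l t (j + 1) + sigmaT l t ((l - 1) / 2 + 1 - j)) / 2) * (n j : ℤ)
  - ((sigmaT l t ((l - 1) / 2) + 1) / 2) * (n ((l - 1) / 2) : ℤ)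
  - ∑ j ∈ Icc 1 ((l - 1) / 2), sigmaT l t j

/-- Takata's exponent `b₁(n)` (an integer; every integer division below is exact
whenever the factor it multiplies is nonzero). -/
def b1T (l t : ℕ) (n : ℕ → ℕ) : ℤ :=
  -aT l t n
  + ∑ k ∈ Icc 1 ((l - t) / 2), ((1 - sigmaT l t (iT l t k)) / 2) * (n (iT l t k - 1) : ℤ)
  - ∑ k ∈ Icc ((l - t) / 2 + 1) ((l - 1) / 2), (n (iT l t k - 1) : ℤ)
  + ∑ k ∈ Icc ((l - t) / 2 + 1) ((l - 1) / 2), ((1 + sigmaT l t (iT l t k)) / 2) * (n (iT l t k) : ℤ)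
  - (1 + sigmaT l t ((l - 1) / 2)) * (n ((l - 1) / 2) : ℤ)
  + ∑ j ∈ Icc 1 ((l - 1) / 2 - 1), ((sigmaT l t (j + 1) - sigmaT l t j) / 2) * (n j : ℤ)
  - ∑ k ∈ Icc 1 ((l - 1) / 2 - 1), ∑ k' ∈ Icc (k + 1) ((l - 1) / 2),
      ((1 + Int.sign ((iT l t k : ℤ) - (iT l t k' : ℤ))) / 2) *
        ((sigmaT l t (iT l t k) - sigmaT l t (iT l t k')) / 2) *
        ((n (iT l t k) : ℤ) - (n (iT l t k - 1) : ℤ)) *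
        ((n (iT l t k') : ℤ) - (n (iT l t k' - 1) : ℤ))
  + ∑ j ∈ Icc 1 ((l - 1) / 2), sigmaT l t j *
      (∑ k ∈ Icc 1 (rpT l t j), ((n (iT l t k) : ℤ) - (n (iT l t k - 1) : ℤ))) * (n (j - 1) : ℤ)

/-- Takata's exponent `b₂(n)`. -/
def b2T (l t : ℕ) (n : ℕ → ℕ) : ℤ :=
  if l < 2 * t then
    ∑ k ∈ Icc ((l - t) / 2 + 1) ((t - 1) / 2),
      ((1 + sigmaT l t (iT l t k)) / 2) * (n (iT l t k - 1) : ℤ)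
  else
    -∑ k ∈ Icc ((t + 1) / 2 + 1) ((l - t) / 2),
      ((1 + sigmaT l t (iT l t k)) / 2) * (n (iT l t k - 1) : ℤ)

/-- Takata's `κ(p')`. -/
def kapT (l t N : ℕ) (n : ℕ → ℕ) : ℤ :=
  if sigmaT l t ((l - 1) / 2) = -1 then -(N : ℤ) * (n ((l - 1) / 2) : ℤ) else 0

/-- Takata's `τ(j)`. -/
def tauT (l t : ℕ) (q : ℂ) (n : ℕ → ℕ) (j : ℕ) : ℂ :=
  if sigmaT l t j = -1 then (-1 : ℂ) ^ (n j - n (j - 1))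
  else q ^ ((((n j : ℤ) - (n (j - 1) : ℤ)) * (((n j : ℤ) - (n (j - 1) : ℤ)) + 1)) / 2)

/-- Takata's `X(n)`. -/
def XT (l t N : ℕ) (q : ℂ) (n : ℕ → ℕ) : ℂ :=
  (-1 : ℂ) ^ (n ((l - 1) / 2)) * q ^ kapT l t N n *
    (qPoch q q (N - 1) * qPoch q q (n ((l - 1) / 2)) / qPoch q q (N - n ((l - 1) / 2) - 1)) *
    ∏ j ∈ Icc 1 ((l - 1) / 2), tauT l t q n j / qPoch q q (n j - n (j - 1))

/-- `r(j) ≡ (2j-1)t (mod 2l)`, with `r(j)` equal to the residue or the residue minus `2l`. -/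
lemma exists_mul_eq_rT (l t j : ℕ) :
    ∃ c : ℤ, (((2 * j - 1) * t : ℕ) : ℤ) = 2 * l * c + rT l t j := by
  have h := Nat.div_add_mod ((2 * j - 1) * t) (2 * l)
  zify at h
  unfold rT
  push_cast
  split_ifs
  · exact ⟨_, h.symm⟩
  · exact ⟨((2 * j - 1 : ℕ) * t : ℤ) / (2 * l) + 1, by linear_combination -h⟩

lemma odd_rT {l t j : ℕ} (ht : Odd t) (hj : 1 ≤ j) : Odd (rT l t j) := by
  obtain ⟨c, hc⟩ := exists_mul_eq_rT l t j
  have hodd : Odd (((2 * j - 1) * t : ℕ) : ℤ) := by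
    rw [Int.odd_coe_nat]
    exact Odd.mul ⟨j - 1, by omega⟩ ht
  rw [hc, mul_assoc] at hodd
  exact (Int.odd_add'.mp hodd).mpr (even_two_mul _)

/-- The map `j ↦ r'(j)` is injective on `{1, …, (l-1)/2}`. -/
lemma rpT_injOn {l t : ℕ} (hl : Odd l) (ht : Odd t) (hlt : l.Coprime t) :
    Set.InjOn (rpT l t) (Finset.Icc 1 ((l - 1) / 2)) := by
  intro j hj j' hj' h
  simp only [coe_Icc, Set.mem_Icc] at hj hj'
  obtain ⟨c, hc⟩ := exists_mul_eq_rT l t j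
  obtain ⟨c', hc'⟩ := exists_mul_eq_rT l t j'
  have ho := Int.natAbs_odd.mpr (odd_rT (l := l) ht hj.1)
  have ho' := Int.natAbs_odd.mpr (odd_rT (l := l) ht hj'.1)
  have hcop : IsCoprime (l : ℤ) (2 * t : ℤ) := by
    have h2 : IsCoprime (l : ℤ) 2 :=
      Nat.isCoprime_iff_coprime.mpr (Nat.coprime_two_right.mpr hl)
    exact h2.mul_right (Nat.isCoprime_iff_coprime.mpr hlt)
  have habs : (rT l t j).natAbs = (rT l t j').natAbs := by
    unfold rpT at h
    obtain ⟨x, hx⟩ := ho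
    obtain ⟨y, hy⟩ := ho'
    omega
  push_cast [Nat.cast_sub (show 1 ≤ 2 * j by omega)] at hc
  push_cast [Nat.cast_sub (show 1 ≤ 2 * j' by omega)] at hc'
  rcases Int.natAbs_eq_natAbs_iff.mp habs with hr | hr
  · have hd : (l : ℤ) ∣ (j : ℤ) - j' := by
      refine hcop.dvd_of_dvd_mul_left ⟨2 * (c - c'), ?_⟩
      linear_combination hc - hc' + hr
    have h0 := Int.eq_zero_of_abs_lt_dvd hd (by rw [abs_lt]; omega)
    omega
  · have hd : (l : ℤ) ∣ (j : ℤ) + j' - 1 := by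
      refine hcop.dvd_of_dvd_mul_left ⟨2 * (c + c'), ?_⟩
      linear_combination hc + hc' + hr
    have h0 := Int.eq_zero_of_abs_lt_dvd hd (by rw [abs_lt]; omega)
    omega

lemma iT_eq_of_rpT_eq {l t j k : ℕ} (hl : Odd l) (ht : Odd t) (hlt : l.Coprime t)
    (hj : j ∈ Finset.Icc 1 ((l - 1) / 2)) (hjk : rpT l t j = k) : iT l t k = j := by
  have h : ∃ j, j ∈ Finset.Icc 1 ((l - 1) / 2) ∧ rpT l t j = k := ⟨j, hj, hjk⟩
  rw [iT, dif_pos h]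
  exact rpT_injOn hl ht hlt h.choose_spec.1 hj (h.choose_spec.2.trans hjk.symm)

lemma rpT_eq_and_sigmaT_eq_one {l t j k q : ℕ} (hk : 1 ≤ k) (hkl : 2 * k - 1 < l)
    (h : (2 * j - 1) * t = 2 * l * q + (2 * k - 1)) :
    rpT l t j = k ∧ sigmaT l t j = 1 := by
  constructor
  · have hmod : (2 * j - 1) * t % (2 * l) = 2 * k - 1 := by
      rw [h, Nat.mul_add_mod, Nat.mod_eq_of_lt (by omega)]
    rw [rpT, rT, hmod, if_pos (by exact_mod_cast hkl), Int.natAbs_natCast]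
    omega
  · have hdiv : (2 * j - 1) * t / l = 2 * q := by
      rw [h, show 2 * l * q = l * (2 * q) by ring, Nat.mul_add_div (by omega),
        Nat.div_eq_of_lt hkl, add_zero]
    rw [sigmaT, hdiv]
    exact (even_two_mul q).neg_one_pow

lemma rpT_eq_and_sigmaT_eq_neg_one {l t j k q : ℕ} (hk : 1 ≤ k) (hkl : 2 * k - 1 < l)
    (h : (2 * j - 1) * t + (2 * k - 1) = 2 * l * (q + 1)) :
    rpT l t j = k ∧ sigmaT l t j = -1 := by
  have h' : (2 * j - 1) * t = 2 * l * q + (2 * l - (2 * k - 1)) := by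
    rw [mul_add] at h
    omega
  constructor
  · have hmod : (2 * j - 1) * t % (2 * l) = 2 * l - (2 * k - 1) := by
      rw [h', Nat.mul_add_mod, Nat.mod_eq_of_lt (by omega)]
    rw [rpT, rT, hmod, if_neg (by omega)]
    omega
  · have hdiv : (2 * j - 1) * t / l = 2 * q + 1 := by
      rw [h', show 2 * l * q + (2 * l - (2 * k - 1)) = l * (2 * q + 1) + (l - (2 * k - 1)) by
          rw [show l * (2 * q + 1) = 2 * l * q + l by ring]; omega,
        Nat.mul_add_div (by omega), Nat.div_eq_of_lt (by omega), add_zero]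
    rw [sigmaT, hdiv]
    exact (odd_two_mul_add_one q).neg_one_pow

/-- For `l = 4mp-1` and `t = 4mp-2p-1`, the signs `σ_(i_k)` are constant on blocks of
length `p` and alternate from one block to the next. -/
lemma sigmaT_iT_eq_neg_one_pow {m p k : ℕ} (hm : 0 < m) (hp : 0 < p) (hk1 : 1 ≤ k)
    (hk2 : k ≤ 2 * m * p - 1) :
    sigmaT (4 * m * p - 1) (4 * m * p - 2 * p - 1)
      (iT (4 * m * p - 1) (4 * m * p - 2 * p - 1) k) = (-1) ^ ((k - 1) / p) := by
  have hmp : p ≤ m * p := Nat.le_mul_of_pos_left p hm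
  obtain ⟨l, hl⟩ : ∃ l, l = 4 * m * p - 1 := ⟨_, rfl⟩
  obtain ⟨t, ht⟩ : ∃ t, t = 4 * m * p - 2 * p - 1 := ⟨_, rfl⟩
  rw [← hl, ← ht]
  rw [mul_assoc] at hl ht hk2
  have hl' : l + 1 = 4 * (m * p) := by omega
  have ht' : t + 2 * p = l := by omega
  have hlodd : Odd l := ⟨2 * (m * p) - 1, by omega⟩
  have htodd : Odd t := ⟨2 * (m * p) - p - 1, by omega⟩
  have hcop : l.Coprime t := by
    rw [← Nat.isCoprime_iff_coprime]
    refine ⟨2 * m - 1, -(2 * m), ?_⟩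
    zify at hl' ht'
    linear_combination -hl' - 2 * m * ht'
  obtain ⟨b, c, hc, hkbc⟩ : ∃ b c, c < p ∧ k = p * b + c + 1 :=
    ⟨(k - 1) / p, (k - 1) % p, Nat.mod_lt _ hp, by rw [Nat.div_add_mod]; omega⟩
  have hb : (k - 1) / p = b := by
    rw [hkbc, Nat.add_sub_cancel, Nat.mul_add_div hp, Nat.div_eq_of_lt hc, add_zero]
  rw [hb]
  have hkl : 2 * k - 1 < l := by omega
  rcases Nat.even_or_odd' b with ⟨s, rfl | rfl⟩
  · have hsm : s < m := by
      by_contra! hms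
      have := Nat.mul_le_mul_left p hms
      rw [mul_comm p m] at this
      rw [mul_left_comm] at hkbc
      omega
    obtain ⟨d, rfl⟩ : ∃ d, p = c + d + 1 := ⟨p - 1 - c, by omega⟩
    obtain ⟨e, rfl⟩ : ∃ e, m = s + e + 1 := ⟨m - 1 - s, by omega⟩
    obtain ⟨j, hj⟩ : ∃ j, j = 2 * d * (s + e + 1) + e + 1 := ⟨_, rfl⟩
    have hdj : 2 * d ≤ 2 * d * (s + e + 1) := Nat.le_mul_of_pos_right _ hm
    obtain ⟨q, hq⟩ : ∃ q, j = d + 1 + q := ⟨j - d - 1, by omega⟩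
    have hval : (2 * j - 1) * t = 2 * l * q + (2 * k - 1) := by
      zify [show 1 ≤ 2 * j by omega, show 1 ≤ 2 * k by omega] at hl' ht' hkbc hj hq ⊢
      have ht'' : (t : ℤ) = l - 2 * (c + d + 1) := by linear_combination ht'
      have hl'' : (l : ℤ) = 4 * ((s + e + 1) * (c + d + 1)) - 1 := by linear_combination hl'
      have hq' : (q : ℤ) = j - d - 1 := by linear_combination -hq
      rw [ht'', hl'', hq', hkbc, hj]
      ring
    obtain ⟨hr, hs⟩ := rpT_eq_and_sigmaT_eq_one hk1 hkl hval
    have hjmem : j ∈ Finset.Icc 1 ((l - 1) / 2) := by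
      rw [Finset.mem_Icc]
      have : 2 * ((s + e + 1) * (c + d + 1)) =
          2 * d * (s + e + 1) + 2 * (s + e + 1) + 2 * (c * (s + e + 1)) := by ring
      omega
    rw [iT_eq_of_rpT_eq hlodd htodd hcop hjmem hr, hs, (even_two_mul s).neg_one_pow]
  · have hsm : p * (2 * s + 1) < p * (2 * m) := by
      rw [mul_left_comm p 2 m, mul_comm p m]
      omega
    replace hsm : s < m := by have := Nat.lt_of_mul_lt_mul_left hsm; omega
    obtain ⟨j, hj⟩ : ∃ j, j = m * (2 * c + 1) + s + 1 := ⟨_, rfl⟩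
    have hcj : 2 * c + 1 ≤ m * (2 * c + 1) := Nat.le_mul_of_pos_left _ hm
    obtain ⟨q, hq⟩ : ∃ q, j = c + 1 + (q + 1) := ⟨j - c - 2, by omega⟩
    have hval : (2 * j - 1) * t + (2 * k - 1) = 2 * l * (q + 1) := by
      zify [show 1 ≤ 2 * j by omega, show 1 ≤ 2 * k by omega] at hl' ht' hkbc hj hq ⊢
      have ht'' : (t : ℤ) = l - 2 * p := by linear_combination ht'
      have hl'' : (l : ℤ) = 4 * (m * p) - 1 := by linear_combination hl'
      have hq' : (q : ℤ) = j - c - 2 := by linear_combination -hq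
      rw [ht'', hl'', hq', hkbc, hj]
      ring
    obtain ⟨hr, hs⟩ := rpT_eq_and_sigmaT_eq_neg_one hk1 hkl hval
    have hjmem : j ∈ Finset.Icc 1 ((l - 1) / 2) := by
      rw [Finset.mem_Icc]
      have : j + 1 ≤ 2 * (m * p) := by
        rcases Nat.lt_or_ge (c + 1) p with h | h
        · have hmc : m * (c + 2) ≤ m * p := Nat.mul_le_mul_left m h
          have : m * (2 * c + 1) + 3 * m = 2 * (m * (c + 2)) := by ring
          omega
        · obtain rfl : p = c + 1 := by omega
          have : s + 1 < m := by
            by_contra! hms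
            have := Nat.mul_le_mul_right (c + 1) hms
            have : (c + 1) * (2 * s + 1) + c + 1 = 2 * ((s + 1) * (c + 1)) := by ring
            omega
          have : 2 * (m * (c + 1)) = m * (2 * c + 1) + m := by ring
          omega
      omega
    rw [iT_eq_of_rpT_eq hlodd htodd hcop hjmem hr, hs, (odd_two_mul_add_one s).neg_one_pow]

lemma mul_sub_one_div_self {a p : ℕ} (ha : 1 ≤ a) (hp : 0 < p) : (a * p - 1) / p = a - 1 := by
  obtain ⟨a, rfl⟩ := Nat.exists_eq_add_of_le' ha
  rw [show (a + 1) * p - 1 = p * a + (p - 1) by rw [add_mul, mul_comm p a]; omega,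
    Nat.mul_add_div hp, Nat.div_eq_of_lt (by omega)]
  omega

/-- Lemma 2.3(i): for `l = 4mp-1`, `t = 4mp-2p-1`, `p' = 2mp-1`, the value of
`σ_(i_k) + σ_(i_(p'+1-k))`. -/
theorem sigma_iT_sum_neg_neg
    (m p k : ℕ) (hm : 0 < m) (hp : 0 < p)
    (hk1 : 1 ≤ k) (hk2 : k ≤ 2 * m * p - 1) :
    ((∃ a, Odd a ∧ 1 ≤ a ∧ a ≤ 2 * m - 1 ∧ k = a * p) →
      sigmaT (4 * m * p - 1) (4 * m * p - 2 * p - 1) (iT (4 * m * p - 1) (4 * m * p - 2 * p - 1) k)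
        + sigmaT (4 * m * p - 1) (4 * m * p - 2 * p - 1) (iT (4 * m * p - 1) (4 * m * p - 2 * p - 1) (2 * m * p - k)) = 2) ∧
    ((∃ a, Even a ∧ 2 ≤ a ∧ a ≤ 2 * m - 2 ∧ k = a * p) →
      sigmaT (4 * m * p - 1) (4 * m * p - 2 * p - 1) (iT (4 * m * p - 1) (4 * m * p - 2 * p - 1) k)
        + sigmaT (4 * m * p - 1) (4 * m * p - 2 * p - 1) (iT (4 * m * p - 1) (4 * m * p - 2 * p - 1) (2 * m * p - k)) = -2) ∧
    (¬ p ∣ k →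
      sigmaT (4 * m * p - 1) (4 * m * p - 2 * p - 1) (iT (4 * m * p - 1) (4 * m * p - 2 * p - 1) k)
        + sigmaT (4 * m * p - 1) (4 * m * p - 2 * p - 1) (iT (4 * m * p - 1) (4 * m * p - 2 * p - 1) (2 * m * p - k)) = 0) := by
  have hkm : k < 2 * m * p := by have := Nat.mul_pos (Nat.mul_pos two_pos hm) hp; omega
  rw [sigmaT_iT_eq_neg_one_pow hm hp hk1 hk2,
    sigmaT_iT_eq_neg_one_pow hm hp (k := 2 * m * p - k) (by omega) (by omega)]
  refine ⟨?_, ?_, fun hpk => ?_⟩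
  · rintro ⟨a, ha, ha1, ha2, rfl⟩
    rw [← Nat.sub_mul, mul_sub_one_div_self ha1 hp, mul_sub_one_div_self (by omega) hp]
    obtain ⟨b, rfl⟩ := ha
    rw [Even.neg_one_pow ⟨b, by omega⟩, Even.neg_one_pow ⟨m - b - 1, by omega⟩]
    norm_num
  · rintro ⟨a, ha, ha1, ha2, rfl⟩
    rw [← Nat.sub_mul, mul_sub_one_div_self (by omega) hp, mul_sub_one_div_self (by omega) hp]
    obtain ⟨b, rfl⟩ := ha
    rw [Odd.neg_one_pow ⟨b - 1, by omega⟩, Odd.neg_one_pow ⟨m - b - 1, by omega⟩]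
    norm_num
  · obtain ⟨a, r, hr, rfl⟩ : ∃ a r, r < p ∧ k = p * a + r :=
      ⟨k / p, k % p, Nat.mod_lt _ hp, (Nat.div_add_mod k p).symm⟩
    have hr0 : 0 < r := by
      by_contra! h
      exact hpk ⟨a, by omega⟩
    have ha : a < 2 * m := by
      refine Nat.lt_of_mul_lt_mul_left (a := p) ?_
      rw [mul_comm p (2 * m)]
      omega
    obtain ⟨d, hd⟩ : ∃ d, 2 * m = a + d + 1 := ⟨2 * m - a - 1, by omega⟩
    have h₁ : (p * a + r - 1) / p = a := by
      rw [Nat.add_sub_assoc hr0, Nat.mul_add_div hp, Nat.div_eq_of_lt (by omega), add_zero]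
    have h₂ : (2 * m * p - (p * a + r) - 1) / p = d := by
      rw [hd, show (a + d + 1) * p - (p * a + r) - 1 = p * d + (p - r - 1) by
          rw [show (a + d + 1) * p = p * a + p * d + p by ring]; omega,
        Nat.mul_add_div hp, Nat.div_eq_of_lt (by omega), add_zero]
    rw [h₁, h₂]
    rcases Nat.even_or_odd a with h | h
    · rw [h.neg_one_pow, Odd.neg_one_pow (by grind)]
      norm_num
    · rw [h.neg_one_pow, Even.neg_one_pow (by grind)]
      norm_num

end
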